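/- On a Hilbert space, an invertible power bounded operator whose inverse is also power bounded is similar to a unitary operator. -/

import Mathlib

open ContinuousLinearMap Filter

/-!
It suffices to find a positive invertible `A` with `T† A T = A`: then `W = √A` satisfies
`W† W = A`, and this says that `W T W⁻¹` is unitary. Such an `A` is a fixed point of the linear map
`B ↦ T† B T`, whose orbit through `1` consists of the operators `(Tⁿ)† Tⁿ`. Power boundedness of `T`
bounds their norms, and power boundedness of `T⁻¹` bounds them below by some `r > 0`. Operators
subject to both bounds form a convex set that is compact in the weak operator topology, so a cluster
point of the Birkhoff averages of the orbit is a fixed point `A ≥ r`.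
-/

open scoped InnerProductSpace Pointwise Topology

section BirkhoffAverage

variable {V : Type*} [AddCommGroup V] [Module ℝ V]

lemma birkhoffAverage_mem_of_convex {α : Type*} {f : α → α} {g : α → V} {x : α} {s : Set V}
    (hs : Convex ℝ s) (hmem : ∀ k, g (f^[k] x) ∈ s) {n : ℕ} (hn : n ≠ 0) :
    birkhoffAverage ℝ f g n x ∈ s := by
  rw [birkhoffAverage, birkhoffSum, Finset.smul_sum]
  refine hs.sum_mem (fun _ _ => by positivity) ?_ fun k _ => hmem k
  simp [hn]

lemma map_birkhoffAverage_id (f : V →+ V) (n : ℕ) (x : V) :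
    f (birkhoffAverage ℝ f id n x) = birkhoffAverage ℝ f id n (f x) := by
  rw [map_birkhoffAverage ℝ ℝ]
  simp only [birkhoffAverage, birkhoffSum, Function.comp_def, id, ← Function.iterate_succ_apply,
    Function.iterate_succ_apply']

variable [TopologicalSpace V] [IsTopologicalAddGroup V]

lemma tendsto_map_birkhoffAverage_id_sub {f : V →+ V} {x : V}
    (hx : Bornology.IsVonNBounded ℝ (Set.range fun n => f^[n] x)) :
    Tendsto (fun n => f (birkhoffAverage ℝ f id n x) - birkhoffAverage ℝ f id n x)
      atTop (𝓝 0) := by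
  simp only [map_birkhoffAverage_id, birkhoffAverage_apply_sub_birkhoffAverage, id]
  exact (hx.sub hx).smul_tendsto_zero
    (Eventually.of_forall fun n => Set.sub_mem_sub ⟨n, rfl⟩ ⟨0, rfl⟩)
    tendsto_inv_atTop_nhds_zero_nat

/- The Markov–Kakutani fixed point theorem for a single map. -/
theorem exists_mem_map_eq_self_of_forall_iterate_mem [ContinuousSMul ℝ V] [T2Space V] {K : Set V}
    (hK : IsCompact K) (hconv : Convex ℝ K) {f : V →+ V} (hf : Continuous f) {x : V}
    (hx : ∀ n, f^[n] x ∈ K) : ∃ y ∈ K, f y = y := by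
  let U : Ultrafilter ℕ := hyperfilter ℕ
  let a (n : ℕ) : V := birkhoffAverage ℝ f id n x
  have haK : ∀ᶠ n in U, a n ∈ K := Nat.hyperfilter_le_atTop <|
    (eventually_ne_atTop 0).mono fun n hn => birkhoffAverage_mem_of_convex hconv hx hn
  obtain ⟨y, hyK, hy⟩ := hK.ultrafilter_le_nhds' (U.map a) haK
  have hay : Tendsto a U (𝓝 y) := hy
  have hfa : Tendsto (fun n => f (a n) - a n) U (𝓝 0) :=
    (tendsto_map_birkhoffAverage_id_sub <|
      (hK.isVonNBounded ℝ).subset (Set.range_subset_iff.2 hx)).mono_left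
        Nat.hyperfilter_le_atTop
  exact ⟨y, hyK, sub_eq_zero.1 <| tendsto_nhds_unique (((hf.tendsto y).comp hay).sub hay) hfa⟩

end BirkhoffAverage

section WeakOperatorTopology

open ContinuousLinearMapWOT

variable {𝕜 E F : Type*} [RCLike 𝕜] [NormedAddCommGroup E] [NormedSpace 𝕜 E]
  [NormedAddCommGroup F] [InnerProductSpace 𝕜 F] [CompleteSpace F]

lemma exists_continuousLinearMap_inner_eq_of_bound (B : E →ₗ⋆[𝕜] F →ₗ[𝕜] 𝕜) {r : ℝ} (hr : 0 ≤ r)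
    (hB : ∀ x y, ‖B x y‖ ≤ r * ‖x‖ * ‖y‖) :
    ∃ A : E →L[𝕜] F, ‖A‖ ≤ r ∧ ∀ x y, ⟪A x, y⟫_𝕜 = B x y := by
  let B' : E →L⋆[𝕜] F →L[𝕜] 𝕜 := B.mkContinuous₂ r hB
  refine ⟨(InnerProductSpace.toDual 𝕜 F).symm.toContinuousLinearEquiv.toContinuousLinearMap.comp B',
    opNorm_le_bound _ hr fun x => ?_, fun x y => ?_⟩
  · simpa using B'.le_of_opNorm_le (B.mkContinuous₂_norm_le hr hB) x
  · simp [B']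

theorem isCompact_preimage_toCLM_closedBall (r : ℝ) :
    IsCompact ((toCLM : (E →WOT[𝕜] F) → E →L[𝕜] F) ⁻¹' Metric.closedBall 0 r) := by
  refine isCompact_iff_ultrafilter_le_nhds'.2 fun U hU => ?_
  simp only [Metric.closedBall, dist_zero_right, Set.preimage_ofPred_eq] at hU ⊢
  obtain ⟨A₀, hA₀⟩ := U.nonempty_of_mem hU
  have hr : 0 ≤ r := (norm_nonneg _).trans hA₀
  have hbound (x : E) (y : F) : ∀ᶠ A : E →WOT[𝕜] F in U, ‖⟪A x, y⟫_𝕜‖ ≤ r * ‖x‖ * ‖y‖ := by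
    filter_upwards [hU] with A hA
    exact (norm_inner_le_norm _ _).trans <| by gcongr; exact A.toCLM.le_of_opNorm_le hA x
  have hlim (x : E) (y : F) :
      ∃ z, Tendsto (fun A : E →WOT[𝕜] F => ⟪A x, y⟫_𝕜) U (𝓝 z) := by
    obtain ⟨z, -, hz⟩ := (isCompact_closedBall (0 : 𝕜) (r * ‖x‖ * ‖y‖)).ultrafilter_le_nhds'
      (U.map fun A : E →WOT[𝕜] F => ⟪A x, y⟫_𝕜)
      (by simpa [Set.preimage, Filter.Eventually] using hbound x y)
    exact ⟨z, hz⟩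
  choose b hb using hlim
  let B : E →ₗ⋆[𝕜] F →ₗ[𝕜] 𝕜 := LinearMap.mk₂'ₛₗ (starRingEnd 𝕜) (RingHom.id 𝕜) b
    (fun x x' y => tendsto_nhds_unique (hb _ _) <| by
      simpa only [map_add, inner_add_left] using (hb x y).add (hb x' y))
    (fun c x y => tendsto_nhds_unique (hb _ _) <| by
      simpa only [map_smul, inner_smul_left, smul_eq_mul] using
        (hb x y).const_mul (starRingEnd 𝕜 c))
    (fun x y y' => tendsto_nhds_unique (hb _ _) <| by
      simpa only [inner_add_right] using (hb x y).add (hb x y'))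
    (fun c x y => tendsto_nhds_unique (hb _ _) <| by
      simpa only [inner_smul_right, smul_eq_mul, RingHom.id_apply] using (hb x y).const_mul c)
  obtain ⟨A, hA, hAB⟩ := exists_continuousLinearMap_inner_eq_of_bound B hr
    fun x y => le_of_tendsto (hb x y).norm (hbound x y)
  refine ⟨ofCLM A, hA, le_nhds_iff_forall_inner_apply_le_nhds.2 fun x y => ?_⟩
  have hAxy : Tendsto (fun A' : E →WOT[𝕜] F => ⟪A' x, y⟫_𝕜) U (𝓝 ⟪A x, y⟫_𝕜) :=
    (hAB x y).symm ▸ hb x y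
  simpa only [Function.comp_def, inner_conj_symm] using!
    (RCLike.continuous_conj.tendsto _).comp hAxy

lemma isClosed_setOf_isPositive_toCLM : IsClosed {A : F →WOT[𝕜] F | A.toCLM.IsPositive} := by
  have hsa (A : F →WOT[𝕜] F) : IsSelfAdjoint A.toCLM ↔ star A = A :=
    toCLM_injective.eq_iff (a := star A)
  simp only [isPositive_def', hsa, reApplyInnerSelf_apply, coe_toCLM, Set.ofPred_and,
    Set.ofPred_forall, ← inner_re_symm]
  exact (isClosed_eq continuous_star continuous_id).inter <|
    isClosed_iInter fun x => isClosed_le continuous_const <| by fun_prop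

lemma isClosed_preimage_toCLM_Ici (A : F →L[𝕜] F) :
    IsClosed ((toCLM : (F →WOT[𝕜] F) → F →L[𝕜] F) ⁻¹' Set.Ici A) :=
  isClosed_setOf_isPositive_toCLM.preimage (continuous_sub_right (ofCLM A))

end WeakOperatorTopology

section CStarAlgebra

variable {𝒜 : Type*} [CStarAlgebra 𝒜] [PartialOrder 𝒜] [StarOrderedRing 𝒜]

lemma inv_sq_smul_one_le_star_mul_self {s t : 𝒜} (hst : s * t = 1) {r : ℝ} (hr : 0 < r)
    (hs : ‖s‖ ≤ r) : (r ^ 2)⁻¹ • (1 : 𝒜) ≤ star t * t := by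
  have hss : star s * s ≤ algebraMap ℝ 𝒜 (r ^ 2) :=
    CStarAlgebra.star_mul_le_algebraMap_norm_sq.trans <| algebraMap_mono 𝒜 (by gcongr)
  rw [inv_smul_le_iff_of_pos (by positivity)]
  calc (1 : 𝒜) = star t * (star s * s) * t := by
        rw [mul_assoc, mul_assoc, hst, mul_one, ← star_mul, hst, star_one]
    _ ≤ star t * algebraMap ℝ 𝒜 (r ^ 2) * t := star_left_conjugate_le_conjugate hss t
    _ = r ^ 2 • (star t * t) := by simp [Algebra.algebraMap_eq_smul_one]

lemma exists_units_conj_mem_unitary_of_star_mul_mul_eq {a : 𝒜} (ha : IsStrictlyPositive a)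
    {t : 𝒜ˣ} (hat : star (t : 𝒜) * a * t = a) :
    ∃ w : 𝒜ˣ, (w * t * ↑w⁻¹ : 𝒜) ∈ unitary 𝒜 := by
  obtain ⟨w, hw⟩ := ha.isUnit_cfcSqrt
  have hwa : star (w : 𝒜) * w = a := by
    rw [hw, (CFC.sqrt_nonneg a).isSelfAdjoint.star_eq, CFC.sqrt_mul_sqrt_self a ha.nonneg]
  refine ⟨w, ?_⟩
  rw [← Units.val_mul, Units.mul_inv_mem_unitary, Units.ext_iff]
  calc star ((w : 𝒜) * t) * (w * t) = star (t : 𝒜) * (star (w : 𝒜) * w) * t := by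
        rw [star_mul]; noncomm_ring
    _ = star (w : 𝒜) * w := by rw [hwa, hat]

end CStarAlgebra

section PowerBounded

/-- Power boundedness of an element of a normed algebra, in particular of a bounded operator: its
powers with natural exponents are uniformly bounded in norm. -/
def IsPowerBounded {M : Type*} [Norm M] [Monoid M] (a : M) : Prop :=
  ∃ C : ℝ, ∀ n : ℕ, ‖a ^ n‖ ≤ C

lemma IsPowerBounded.exists_pos {M : Type*} [Norm M] [Monoid M] {a : M} (ha : IsPowerBounded a) :
    ∃ C : ℝ, 0 < C ∧ ∀ n : ℕ, ‖a ^ n‖ ≤ C :=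
  let ⟨C, hC⟩ := ha
  ⟨max C 1, by positivity, fun n => (hC n).trans (le_max_left C 1)⟩

open ContinuousLinearMapWOT

variable {X : Type*} [NormedAddCommGroup X] [InnerProductSpace ℂ X] [CompleteSpace X]

theorem exists_isStrictlyPositive_star_mul_mul_eq {S T : X →L[ℂ] X} (hST : S * T = 1)
    (hT : IsPowerBounded T) (hS : IsPowerBounded S) :
    ∃ A : X →L[ℂ] X, IsStrictlyPositive A ∧ star T * A * T = A := by
  obtain ⟨C, hC⟩ := hT
  obtain ⟨D, hDpos, hD⟩ := hS.exists_pos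
  let conj : (X →WOT[ℂ] X) →+ (X →WOT[ℂ] X) :=
    (AddMonoidHom.mulRight (ofCLM T)).comp (AddMonoidHom.mulLeft (ofCLM (star T)))
  have hcont : Continuous conj := (continuous_mul_const _).comp (continuous_const_mul _)
  have hiter (n : ℕ) : conj^[n] 1 = ofCLM (star (T ^ n) * T ^ n) := by
    induction n with
    | zero => simp
    | succ n ih =>
      rw [Function.iterate_succ_apply', ih]
      simp [conj, pow_succ, mul_assoc, (Commute.pow_self _ _).eq]
  let r : ℝ := (D ^ 2)⁻¹
  let K : Set (X →WOT[ℂ] X) := toCLM ⁻¹' (Metric.closedBall 0 (C ^ 2) ∩ Set.Ici (r • 1))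
  have hK : IsCompact K :=
    (isCompact_preimage_toCLM_closedBall _).inter_right (isClosed_preimage_toCLM_Ici _)
  have hconv : Convex ℝ K := ((convex_closedBall _ _).inter (convex_Ici _)).is_linear_preimage
    ⟨fun _ _ => toCLM_add, fun _ _ => toCLM_smul⟩
  have horbit (n : ℕ) : conj^[n] 1 ∈ K := by
    rw [hiter]
    refine ⟨?_, inv_sq_smul_one_le_star_mul_self (pow_mul_pow_eq_one n hST) hDpos (hD n)⟩
    rw [toCLM_ofCLM, mem_closedBall_zero_iff, CStarRing.norm_star_mul_self, ← sq]
    gcongr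
    exact hC n
  obtain ⟨A, ⟨-, hrA⟩, hA⟩ := exists_mem_map_eq_self_of_forall_iterate_mem hK hconv hcont horbit
  have hr : IsStrictlyPositive (r • (1 : X →L[ℂ] X)) :=
    isStrictlyPositive_one.smul (by positivity)
  exact ⟨A.toCLM, hr.of_le hrA, congrArg toCLM hA⟩

theorem IsPowerBounded.exists_units_conj_mem_unitary {T : (X →L[ℂ] X)ˣ}
    (hT : IsPowerBounded (T : X →L[ℂ] X)) (hT' : IsPowerBounded (↑T⁻¹ : X →L[ℂ] X)) :
    ∃ W : (X →L[ℂ] X)ˣ, (W * T * ↑W⁻¹ : X →L[ℂ] X) ∈ unitary (X →L[ℂ] X) :=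
  let ⟨_, hA, hTA⟩ := exists_isStrictlyPositive_star_mul_mul_eq T.inv_mul hT hT'
  exists_units_conj_mem_unitary_of_star_mul_mul_eq hA hTA

end PowerBounded

/-- Corollary 6.1 (Sz.-Nagy): on a Hilbert space, an invertible power bounded operator with
power bounded inverse is similar to a unitary operator. -/
theorem stmt16 {X : Type*} [NormedAddCommGroup X] [InnerProductSpace ℂ X] [CompleteSpace X]
    (T T' : X →L[ℂ] X) (hTT' : T ∘L T' = 1) (hT'T : T' ∘L T = 1)
    (hT : ∃ C : ℝ, ∀ n : ℕ, ‖T ^ n‖ ≤ C) (hT' : ∃ C : ℝ, ∀ n : ℕ, ‖T' ^ n‖ ≤ C) :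
    ∃ W W' : X →L[ℂ] X, W ∘L W' = 1 ∧ W' ∘L W = 1 ∧
      (∀ x : X, ‖(W ∘L T ∘L W') x‖ = ‖x‖) ∧
      Function.Surjective (W ∘L T ∘L W') := by
  let u : (X →L[ℂ] X)ˣ := ⟨T, T', hTT', hT'T⟩
  obtain ⟨W, hW⟩ := IsPowerBounded.exists_units_conj_mem_unitary (T := u) hT hT'
  refine ⟨W, ↑W⁻¹, W.mul_inv, W.inv_mul, norm_map_of_mem_unitary hW, ?_⟩
  exact (Unitary.linearIsometryEquiv ⟨_, hW⟩).surjective
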